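/- Imperfect-parity expectation in a rotated GHZ state: let N ≥ 1 and δ, η, φ ∈ ℝ. On the Hilbert space ℂ^{(Fin N → Fin 2)}, define the matrix P by P(v, w) := ∏_{j} A(v(j), w(j)), where A is the 2×2 real matrix with A(0,0) = A(1,1) = δ and A(0,1) = A(1,0) = η. Define the unit vector g by g(v) := (1/√2)·e^{iNφ/2} if v is the constant function 0, g(v) := (1/√2)·e^{−iNφ/2} if v is the constant function 1, and g(v) := 0 otherwise. Then ⟨g, P·g⟩ = δ^N + η^N·cos(Nφ). -/

import Mathlib

open Matrix
open scoped Classical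

/-- imperfect-parity expectation in a rotated GHZ state: for the
N-fold Kronecker product P of the 2×2 matrix with diagonal entries δ and
off-diagonal entries η, and the GHZ state g rotated by phase φ, one has
⟨g, P g⟩ = δ^N + η^N cos(Nφ). -/
theorem ghz_imperfect_parity_expectation
    (N : ℕ) (hN : 1 ≤ N) (δ η φ : ℝ)
    (P : Matrix (Fin N → Fin 2) (Fin N → Fin 2) ℂ)
    (hP : ∀ v w, P v w = ∏ j, (if v j = w j then (δ : ℂ) else (η : ℂ)))
    (g : (Fin N → Fin 2) → ℂ)
    (hg : ∀ v, g v =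
      if v = (fun _ => 0) then
        (1 / (Real.sqrt 2 : ℂ)) * Complex.exp (Complex.I * N * φ / 2)
      else if v = (fun _ => 1) then
        (1 / (Real.sqrt 2 : ℂ)) * Complex.exp (-(Complex.I * N * φ) / 2)
      else 0) :
    star g ⬝ᵥ (P *ᵥ g) = ((δ ^ N + η ^ N * Real.cos (N * φ) : ℝ) : ℂ) := by
  have hne : (fun _ => 1 : Fin N → Fin 2) ≠ (fun _ => 0) := by
    intro h
    have := congrFun h ⟨0, hN⟩
    simp at this
  obtain ⟨a, ha⟩ : ∃ a : ℂ, a = (1 / (Real.sqrt 2 : ℂ)) * Complex.exp (Complex.I * N * φ / 2) :=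
    ⟨_, rfl⟩
  obtain ⟨b, hb⟩ : ∃ b : ℂ, b = (1 / (Real.sqrt 2 : ℂ)) * Complex.exp (-(Complex.I * N * φ) / 2) :=
    ⟨_, rfl⟩
  have hab : star a = b := by
    rw [ha, hb]
    simp [← Complex.exp_conj, Complex.conj_ofNat]
  have hba : star b = a := by rw [← hab, star_star]
  have hs : (1 / (Real.sqrt 2 : ℂ)) * (1 / (Real.sqrt 2 : ℂ)) = 1 / 2 := by
    rw [div_mul_div_comm, ← Complex.ofReal_mul, Real.mul_self_sqrt (by norm_num)]
    norm_num
  have h1 : a * b = 1 / 2 := by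
    rw [ha, hb, mul_mul_mul_comm, hs, ← Complex.exp_add]
    ring_nf
    simp
  have h2 : a * a + b * b = Complex.cos (N * φ) := by
    rw [ha, hb, mul_mul_mul_comm, hs, ← Complex.exp_add, mul_mul_mul_comm, hs, ← Complex.exp_add,
      Complex.cos]
    ring_nf
  simp only [← ha, ← hb] at hg
  have g0 : g (fun _ => 0) = a := by rw [hg, if_pos rfl]
  have g1 : g (fun _ => 1) = b := by rw [hg, if_neg hne, if_pos rfl]
  have key : ∀ f : (Fin N → Fin 2) → ℂ, (∀ v, g v = 0 → f v = 0) →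
      ∑ v, f v = f (fun _ => 1) + f (fun _ => 0) := by
    intro f hf
    rw [← Finset.sum_pair hne]
    symm
    apply Finset.sum_subset (Finset.subset_univ _)
    intro v _ hv
    simp only [Finset.mem_insert, Finset.mem_singleton, not_or] at hv
    apply hf
    rw [hg, if_neg hv.2, if_neg hv.1]
  have hm : ∀ v, (P *ᵥ g) v = P v (fun _ => 1) * b + P v (fun _ => 0) * a := by
    intro v
    rw [Matrix.mulVec, dotProduct, key _ (fun w hw => by rw [hw, mul_zero]), g0, g1]
  rw [dotProduct, key _ (fun w hw => by rw [Pi.star_apply, hw, star_zero, zero_mul])]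
  rw [hm, hm, Pi.star_apply, Pi.star_apply, g0, g1, hab, hba]
  simp only [hP]
  simp
  linear_combination 2 * (δ : ℂ) ^ N * h1 + (η : ℂ) ^ N * h2
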